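/- (Square-integrability of the tracking error for the high-order tuner.) Along any solution of the high-order-tuner error model, ∫_0^∞ ‖e(τ)‖² dτ ≤ V(0), where V(t) = (1/γ)Tr[(Ξ(t)−Θ)ᵀ Λ (Ξ(t)−Θ)] + (1/γ)Tr[(Θ̂(t)−Ξ(t))ᵀ Λ (Θ̂(t)−Ξ(t))] + e(t)ᵀ P e(t). -/

import Mathlib

open Matrix MeasureTheory Filter

/-!
Write `X = Ξ - Θ`, `Y = Θ̂ - Ξ`, `w = Bᵀ P e`. Along a solution the two terms in `X` cancel and
`V' = 2 eᵀ P A_H e + 4 wᵀ Λ Y Φ - (2 β / γ) (1 + μ ‖Φ‖²) Tr(Yᵀ Λ Y)`.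
The first term is at most `-2 ‖e‖²` by the Lyapunov inequality. Cauchy–Schwarz for the form `Λ`,
together with `wᵀ Λ w ≤ ‖Λ‖ ‖P B‖_F² ‖e‖²` and `(Y Φ)ᵀ Λ (Y Φ) ≤ Tr(Yᵀ Λ Y) ‖Φ‖²`, bounds the
second one by `‖e‖² + 4 ‖Λ‖ ‖P B‖_F² ‖Φ‖² Tr(Yᵀ Λ Y)`, and the lower bound on `μ` lets the third
term absorb the trace. Hence `V' ≤ -‖e‖²`, and since `V ≥ 0` integration gives the claim.
-/

section LyapunovIntegral

open Set Topology

lemma exists_tendsto_atTop_of_antitoneOn_Ici {α β : Type*} [LinearOrder α]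
    [ConditionallyCompleteLinearOrder β] [TopologicalSpace β] [OrderTopology β] {f : α → β} {a : α}
    {c : β} (hf : AntitoneOn f (Ici a)) (hc : ∀ x ∈ Ici a, c ≤ f x) :
    ∃ l, c ≤ l ∧ Tendsto f atTop (𝓝 l) := by
  have : Nonempty α := ⟨a⟩
  have hanti : Antitone fun x => f (max a x) := fun x y hxy =>
    hf (le_max_left a x) (le_max_left a y) (max_le_max_left a hxy)
  have hbdd : BddBelow (range fun x => f (max a x)) :=
    ⟨c, forall_mem_range.2 fun x => hc _ (le_max_left a x)⟩
  refine ⟨_, le_ciInf fun x => hc _ (le_max_left a x),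
    (tendsto_atTop_ciInf hanti hbdd).congr' ?_⟩
  filter_upwards [eventually_ge_atTop a] with x hx
  rw [max_eq_right hx]

lemma lintegral_Ioi_le_of_hasDerivWithinAt_le_neg {V V' f : ℝ → ℝ} {a : ℝ}
    (hV : ∀ t ∈ Ici a, HasDerivWithinAt V (V' t) (Ici a) t) (hV_nonneg : ∀ t ∈ Ici a, 0 ≤ V t)
    (hf : ∀ t ∈ Ioi a, 0 ≤ f t) (hV' : ∀ t ∈ Ioi a, V' t ≤ -f t) :
    ∫⁻ t in Ioi a, ENNReal.ofReal (f t) ≤ ENNReal.ofReal (V a) := by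
  have hcont : ContinuousOn V (Ici a) := fun t ht => (hV t ht).continuousWithinAt
  have hderiv : ∀ t ∈ Ioi a, HasDerivAt V (V' t) t := fun t ht =>
    (hV t (Ioi_subset_Ici_self ht)).hasDerivAt (Ici_mem_nhds ht)
  have hV'_nonpos : ∀ t ∈ Ioi a, V' t ≤ 0 := fun t ht => by linarith [hf t ht, hV' t ht]
  have hanti : AntitoneOn V (Ici a) := by
    refine antitoneOn_of_hasDerivWithinAt_nonpos (f' := V') (convex_Ici a) hcont ?_ ?_ <;>
      rw [interior_Ici]
    exacts [fun t ht => (hderiv t ht).hasDerivWithinAt, hV'_nonpos]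
  obtain ⟨l, hl_nonneg, hl⟩ := exists_tendsto_atTop_of_antitoneOn_Ici hanti hV_nonneg
  have hcont_a := hcont a self_mem_Ici
  have hint : IntegrableOn V' (Ioi a) :=
    integrableOn_Ioi_deriv_of_nonpos hcont_a hderiv hV'_nonpos hl
  calc ∫⁻ t in Ioi a, ENNReal.ofReal (f t)
      ≤ ∫⁻ t in Ioi a, ENNReal.ofReal (-V' t) :=
        setLIntegral_mono' measurableSet_Ioi fun t ht =>
          ENNReal.ofReal_le_ofReal (le_neg_of_le_neg (hV' t ht))
    _ = ENNReal.ofReal (∫ t in Ioi a, -V' t) :=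
        (ofReal_integral_eq_lintegral_ofReal hint.neg <| ae_restrict_of_forall_mem
          measurableSet_Ioi fun t ht => neg_nonneg.2 (hV'_nonpos t ht)).symm
    _ = ENNReal.ofReal (V a - l) := by
        rw [integral_neg, integral_Ioi_of_hasDerivAt_of_nonpos hcont_a hderiv hV'_nonpos hl,
          neg_sub]
    _ ≤ ENNReal.ofReal (V a) := ENNReal.ofReal_le_ofReal (sub_le_self _ hl_nonneg)

end LyapunovIntegral

section QuadraticForms

variable {m n R : Type*} [Fintype m] [Fintype n] [CommSemiring R]

lemma dotProduct_mulVec_comm_of_isSymm {M : Matrix n n R} (hM : M.IsSymm) (x y : n → R) :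
    x ⬝ᵥ M *ᵥ y = y ⬝ᵥ M *ᵥ x := by
  rw [dotProduct_mulVec, ← mulVec_transpose, hM.eq, dotProduct_comm]

lemma dotProduct_mulVec_sq_le_of_posSemidef {M : Matrix n n ℝ} (hM : M.PosSemidef)
    (x y : n → ℝ) : (x ⬝ᵥ M *ᵥ y) ^ 2 ≤ (x ⬝ᵥ M *ᵥ x) * (y ⬝ᵥ M *ᵥ y) := by
  classical
  have hnonneg : ∀ z, 0 ≤ M.toBilin' z z := fun z => by
    simpa [toBilin'_apply'] using hM.dotProduct_mulVec_nonneg z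
  have hsymm : M.toBilin'.IsSymm := isSymm_toBilin'_iff_isSymm.2 (isHermitian_iff_isSymm.1 hM.1)
  simpa only [toBilin'_apply'] using
    LinearMap.BilinForm.apply_sq_le_of_symm M.toBilin' hnonneg ⟨hsymm.eq⟩ x y

lemma trace_mul_transpose_self (M : Matrix m n R) : (M * Mᵀ).trace = ∑ i, ∑ j, M i j ^ 2 := by
  simp [trace, mul_apply, sq]

lemma mulVec_dotProduct_self_le_trace (M : Matrix m n ℝ) (x : n → ℝ) :
    M *ᵥ x ⬝ᵥ M *ᵥ x ≤ (Mᵀ * M).trace * (x ⬝ᵥ x) := by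
  rw [trace_mul_comm, trace_mul_transpose_self, Finset.sum_mul]
  refine Finset.sum_le_sum fun i _ => ?_
  simpa [mulVec, dotProduct, sq] using Finset.sum_mul_sq_le_sq_mul_sq Finset.univ (M i) x

open scoped MatrixOrder Matrix.Norms.L2Operator in
lemma dotProduct_mulVec_le_trace_of_posSemidef {M : Matrix n n ℝ} (hM : M.PosSemidef)
    (x : n → ℝ) : x ⬝ᵥ M *ᵥ x ≤ M.trace * (x ⬝ᵥ x) := by
  classical
  obtain ⟨C, rfl⟩ := CStarAlgebra.nonneg_iff_eq_star_mul_self.1 hM.nonneg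
  rw [star_eq_conjTranspose, conjTranspose_eq_transpose_of_trivial, ← mulVec_mulVec,
    dotProduct_mulVec, vecMul_transpose]
  exact mulVec_dotProduct_self_le_trace C x

lemma dotProduct_mulVec_le_opNorm [DecidableEq n] (M : Matrix n n ℝ) (x : n → ℝ) :
    x ⬝ᵥ M *ᵥ x ≤ ‖toEuclideanCLM (𝕜 := ℝ) M‖ * (x ⬝ᵥ x) := by
  set y : EuclideanSpace ℝ n := WithLp.toLp 2 x
  calc x ⬝ᵥ M *ᵥ x = inner ℝ y (toEuclideanCLM (𝕜 := ℝ) M y) := (inner_toEuclideanCLM M y y).symm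
    _ ≤ ‖y‖ * ‖toEuclideanCLM (𝕜 := ℝ) M y‖ := real_inner_le_norm _ _
    _ ≤ ‖y‖ * (‖toEuclideanCLM (𝕜 := ℝ) M‖ * ‖y‖) := by
        gcongr; exact ContinuousLinearMap.le_opNorm _ _
    _ = ‖toEuclideanCLM (𝕜 := ℝ) M‖ * ‖y‖ ^ 2 := by ring
    _ = ‖toEuclideanCLM (𝕜 := ℝ) M‖ * (x ⬝ᵥ x) := by
        rw [EuclideanSpace.real_norm_sq_eq]; simp [y, dotProduct, sq]

lemma trace_transpose_mul_mul_nonneg {Λ : Matrix m m ℝ} (hΛ : Λ.PosSemidef) (X : Matrix m n ℝ) :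
    0 ≤ (Xᵀ * Λ * X).trace := by
  simpa using (hΛ.conjTranspose_mul_mul_same X).trace_nonneg

lemma trace_transpose_mul_mul_eq_sum_col (Λ : Matrix m m R) (X Y : Matrix m n R) :
    (Xᵀ * Λ * Y).trace = ∑ k, X.col k ⬝ᵥ Λ *ᵥ Y.col k := by
  simp only [trace, diag_apply, Matrix.mul_assoc]
  rfl

lemma trace_transpose_mul_mul_vecMulVec {Λ : Matrix m m R} (hΛ : Λ.IsSymm) (X : Matrix m n R)
    (w : m → R) (p : n → R) : (Xᵀ * Λ * vecMulVec w p).trace = w ⬝ᵥ Λ *ᵥ X *ᵥ p := by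
  rw [mul_vecMulVec, trace_vecMulVec, ← mulVec_mulVec, mulVec_transpose, ← dotProduct_mulVec,
    dotProduct_mulVec_comm_of_isSymm hΛ, dotProduct_comm]

variable {s : Set ℝ} {t : ℝ}

lemma hasDerivWithinAt_dotProduct_mulVec {M : Matrix n n ℝ} (hM : M.IsSymm) {x : ℝ → n → ℝ}
    {x' : n → ℝ} (hx : HasDerivWithinAt x x' s t) :
    HasDerivWithinAt (fun r => x r ⬝ᵥ M *ᵥ x r) (2 * (x t ⬝ᵥ M *ᵥ x')) s t := by
  classical
  have hbilin := (toBilin' M).toContinuousBilinearMap.hasDerivWithinAt_of_bilinear hx hx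
  simp only [LinearMap.toContinuousBilinearMap_apply, toBilin'_apply'] at hbilin
  rwa [dotProduct_mulVec_comm_of_isSymm hM x', ← two_mul] at hbilin

lemma hasDerivWithinAt_trace_transpose_mul_mul {Λ : Matrix m m ℝ} (hΛ : Λ.IsSymm)
    {X : ℝ → Matrix m n ℝ} {X' : Matrix m n ℝ}
    (hX : ∀ i j, HasDerivWithinAt (fun r => X r i j) (X' i j) s t) :
    HasDerivWithinAt (fun r => ((X r)ᵀ * Λ * X r).trace) (2 * ((X t)ᵀ * Λ * X').trace) s t := by
  simp only [trace_transpose_mul_mul_eq_sum_col, Finset.mul_sum]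
  exact HasDerivWithinAt.fun_sum fun k _ =>
    hasDerivWithinAt_dotProduct_mulVec hΛ (hasDerivWithinAt_pi.2 fun i => hX i k)

end QuadraticForms

section HighOrderTuner

variable {m n N : Type*} [Fintype m] [Fintype n] [Fintype N]
  {A P : Matrix n n ℝ} {B : Matrix n m ℝ} {Λ : Matrix m m ℝ} {γ β μ : ℝ}

/-- The Lyapunov function of the high-order tuner at the tuner error `X = Ξ - Θ`, the tuner lag
`Y = Θ̂ - Ξ` and the tracking error `e`. -/
noncomputable def tunerLyapunov (γ : ℝ) (Λ : Matrix m m ℝ) (P : Matrix n n ℝ) (X Y : Matrix m N ℝ)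
    (e : n → ℝ) : ℝ :=
  (1 / γ) * (Xᵀ * Λ * X).trace + (1 / γ) * (Yᵀ * Λ * Y).trace + e ⬝ᵥ P *ᵥ e

/-- The derivative of `tunerLyapunov` at `(X, Y, e)` in the direction `(X', Y', e')`, for symmetric
`Λ` and `P`. -/
noncomputable def tunerLyapunovDeriv (γ : ℝ) (Λ : Matrix m m ℝ) (P : Matrix n n ℝ)
    (X Y : Matrix m N ℝ) (e : n → ℝ) (X' Y' : Matrix m N ℝ) (e' : n → ℝ) : ℝ :=
  (1 / γ) * (2 * (Xᵀ * Λ * X').trace) + (1 / γ) * (2 * (Yᵀ * Λ * Y').trace) +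
    2 * (e ⬝ᵥ P *ᵥ e')

lemma tunerLyapunov_nonneg (hγ : 0 ≤ γ) (hΛ : Λ.PosSemidef) (hP : P.PosSemidef)
    (X Y : Matrix m N ℝ) (e : n → ℝ) : 0 ≤ tunerLyapunov γ Λ P X Y e := by
  have hX := trace_transpose_mul_mul_nonneg hΛ X
  have hY := trace_transpose_mul_mul_nonneg hΛ Y
  have he : 0 ≤ e ⬝ᵥ P *ᵥ e := by simpa using hP.dotProduct_mulVec_nonneg e
  unfold tunerLyapunov
  positivity

lemma hasDerivWithinAt_tunerLyapunov (hΛ : Λ.IsSymm) (hP : P.IsSymm) {X Y : ℝ → Matrix m N ℝ}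
    {e : ℝ → n → ℝ} {X' Y' : Matrix m N ℝ} {e' : n → ℝ} {s : Set ℝ} {t : ℝ}
    (hX : ∀ i j, HasDerivWithinAt (fun r => X r i j) (X' i j) s t)
    (hY : ∀ i j, HasDerivWithinAt (fun r => Y r i j) (Y' i j) s t)
    (he : HasDerivWithinAt e e' s t) :
    HasDerivWithinAt (fun r => tunerLyapunov γ Λ P (X r) (Y r) (e r))
      (tunerLyapunovDeriv γ Λ P (X t) (Y t) (e t) X' Y' e') s t :=
  (((hasDerivWithinAt_trace_transpose_mul_mul hΛ hX).const_mul _).fun_add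
    ((hasDerivWithinAt_trace_transpose_mul_mul hΛ hY).const_mul _)).fun_add
    (hasDerivWithinAt_dotProduct_mulVec hP he)

/-- Right-hand side of the equation for the tuner state `Ξ`, at tracking error `e` and regressor
value `p = Φ(t)`. -/
def tunerStateField (γ : ℝ) (P : Matrix n n ℝ) (B : Matrix n m ℝ) (e : n → ℝ) (p : N → ℝ) :
    Matrix m N ℝ :=
  -γ • vecMulVec ((Bᵀ * P) *ᵥ e) p

lemma tunerLyapunovDeriv_along_field (hγ : γ ≠ 0) (hΛ : Λ.IsSymm) (hP : P.IsSymm)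
    (X Y : Matrix m N ℝ) (e : n → ℝ) (p : N → ℝ) :
    tunerLyapunovDeriv γ Λ P X Y e (tunerStateField γ P B e p)
        (-(β * (1 + μ * (p ⬝ᵥ p))) • Y - tunerStateField γ P B e p)
        (A *ᵥ e + (B * Λ * (X + Y)) *ᵥ p) =
      2 * (e ⬝ᵥ P *ᵥ A *ᵥ e) + 4 * ((Bᵀ * P) *ᵥ e ⬝ᵥ Λ *ᵥ Y *ᵥ p) -
        2 * β / γ * (1 + μ * (p ⬝ᵥ p)) * (Yᵀ * Λ * Y).trace := by
  have hadjoint : ∀ v, e ⬝ᵥ P *ᵥ B *ᵥ v = (Bᵀ * P) *ᵥ e ⬝ᵥ v := fun v => by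
    rw [dotProduct_mulVec_comm_of_isSymm hP, dotProduct_comm, ← mulVec_mulVec, mulVec_transpose,
      ← dotProduct_mulVec]
  have hinput : e ⬝ᵥ P *ᵥ ((B * Λ * (X + Y)) *ᵥ p) =
      (Bᵀ * P) *ᵥ e ⬝ᵥ Λ *ᵥ X *ᵥ p + (Bᵀ * P) *ᵥ e ⬝ᵥ Λ *ᵥ Y *ᵥ p := by
    rw [← mulVec_mulVec, ← mulVec_mulVec, hadjoint, add_mulVec, mulVec_add, dotProduct_add]
  simp only [tunerLyapunovDeriv, tunerStateField, Matrix.mul_sub, Matrix.mul_smul, trace_sub,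
    trace_smul, smul_eq_mul, trace_transpose_mul_mul_vecMulVec hΛ, mulVec_add, dotProduct_add,
    hinput]
  field_simp
  ring

lemma two_mul_dotProduct_mulVec_le_of_lyapunov [DecidableEq n] {c : ℝ} (hP : P.IsSymm)
    (hLyap : (-(Aᵀ * P + P * A) - c • 1).PosSemidef) (e : n → ℝ) :
    2 * (e ⬝ᵥ P *ᵥ A *ᵥ e) ≤ -(c * (e ⬝ᵥ e)) := by
  have htranspose : e ⬝ᵥ Aᵀ *ᵥ P *ᵥ e = e ⬝ᵥ P *ᵥ A *ᵥ e := by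
    rw [dotProduct_mulVec, vecMul_transpose, dotProduct_mulVec_comm_of_isSymm hP]
  have hform := hLyap.dotProduct_mulVec_nonneg e
  simp only [star_trivial, sub_mulVec, neg_mulVec, add_mulVec, smul_mulVec, one_mulVec,
    ← mulVec_mulVec, dotProduct_sub, dotProduct_neg, dotProduct_add, dotProduct_smul,
    smul_eq_mul, htranspose] at hform
  linarith

lemma four_mul_dotProduct_mulVec_mulVec_le [DecidableEq m] (hΛ : Λ.PosSemidef) (M : Matrix n m ℝ)
    (Y : Matrix m N ℝ) (e : n → ℝ) (p : N → ℝ) :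
    4 * (Mᵀ *ᵥ e ⬝ᵥ Λ *ᵥ Y *ᵥ p) ≤ e ⬝ᵥ e +
      4 * (‖toEuclideanCLM (𝕜 := ℝ) Λ‖ * ∑ i, ∑ j, M i j ^ 2) * (p ⬝ᵥ p) *
        (Yᵀ * Λ * Y).trace := by
  set F := ∑ i, ∑ j, M i j ^ 2
  set T := (Yᵀ * Λ * Y).trace
  set w := Mᵀ *ᵥ e
  set v := Y *ᵥ p
  have hT : 0 ≤ T := trace_transpose_mul_mul_nonneg hΛ Y
  have he : 0 ≤ e ⬝ᵥ e := dotProduct_self_star_nonneg e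
  have hp : 0 ≤ p ⬝ᵥ p := dotProduct_self_star_nonneg p
  have hv_nonneg : 0 ≤ v ⬝ᵥ Λ *ᵥ v := hΛ.dotProduct_mulVec_nonneg v
  have hw : w ⬝ᵥ Λ *ᵥ w ≤ ‖toEuclideanCLM (𝕜 := ℝ) Λ‖ * (F * (e ⬝ᵥ e)) := by
    refine (dotProduct_mulVec_le_opNorm Λ w).trans ?_
    gcongr
    simpa [trace_mul_transpose_self] using mulVec_dotProduct_self_le_trace Mᵀ e
  have hv : v ⬝ᵥ Λ *ᵥ v ≤ T * (p ⬝ᵥ p) := by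
    have hYΛY : (Yᵀ * Λ * Y).PosSemidef := by simpa using hΛ.conjTranspose_mul_mul_same Y
    have hform : v ⬝ᵥ Λ *ᵥ v = p ⬝ᵥ (Yᵀ * Λ * Y) *ᵥ p := by
      rw [← mulVec_mulVec, ← mulVec_mulVec, dotProduct_mulVec p, vecMul_transpose]
    exact hform ▸ dotProduct_mulVec_le_trace_of_posSemidef hYΛY p
  have hcross : (2 * (w ⬝ᵥ Λ *ᵥ v)) ^ 2 ≤
      (e ⬝ᵥ e) * (4 * (‖toEuclideanCLM (𝕜 := ℝ) Λ‖ * F) * (p ⬝ᵥ p) * T) :=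
    calc (2 * (w ⬝ᵥ Λ *ᵥ v)) ^ 2 = 4 * (w ⬝ᵥ Λ *ᵥ v) ^ 2 := by ring
      _ ≤ 4 * ((w ⬝ᵥ Λ *ᵥ w) * (v ⬝ᵥ Λ *ᵥ v)) := by
          gcongr; exact dotProduct_mulVec_sq_le_of_posSemidef hΛ w v
      _ ≤ 4 * (‖toEuclideanCLM (𝕜 := ℝ) Λ‖ * (F * (e ⬝ᵥ e)) * (T * (p ⬝ᵥ p))) := by gcongr
      _ = _ := by ring
  linarith [two_mul_le_add_of_sq_le_mul he (by positivity) hcross]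

lemma tunerLyapunovDeriv_along_field_le [DecidableEq m] [DecidableEq n] (hγ : 0 < γ) (hβ : 0 < β)
    (hΛ : Λ.PosSemidef) (hP : P.IsSymm) (hLyap : (-(Aᵀ * P + P * A) - (2 : ℝ) • 1).PosSemidef)
    (hμ : 2 * γ / β * (‖toEuclideanCLM (𝕜 := ℝ) Λ‖ * ∑ i, ∑ j, (P * B) i j ^ 2) ≤ μ)
    (X Y : Matrix m N ℝ) (e : n → ℝ) (p : N → ℝ) :
    tunerLyapunovDeriv γ Λ P X Y e (tunerStateField γ P B e p)
        (-(β * (1 + μ * (p ⬝ᵥ p))) • Y - tunerStateField γ P B e p)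
        (A *ᵥ e + (B * Λ * (X + Y)) *ᵥ p) ≤ -(e ⬝ᵥ e) := by
  rw [tunerLyapunovDeriv_along_field hγ.ne' (isHermitian_iff_isSymm.1 hΛ.1) hP]
  have hstable := two_mul_dotProduct_mulVec_le_of_lyapunov hP hLyap e
  have hcross := four_mul_dotProduct_mulVec_mulVec_le hΛ (P * B) Y e p
  rw [transpose_mul, hP.eq] at hcross
  set F := ‖toEuclideanCLM (𝕜 := ℝ) Λ‖ * ∑ i, ∑ j, (P * B) i j ^ 2
  set T := (Yᵀ * Λ * Y).trace
  have hT : 0 ≤ T := trace_transpose_mul_mul_nonneg hΛ Y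
  have hp : 0 ≤ p ⬝ᵥ p := dotProduct_self_star_nonneg p
  have hdamping : 4 * F * (p ⬝ᵥ p) * T ≤ 2 * β / γ * (1 + μ * (p ⬝ᵥ p)) * T :=
    calc 4 * F * (p ⬝ᵥ p) * T = 2 * β / γ * (2 * γ / β * F * (p ⬝ᵥ p)) * T := by
          field_simp; ring
      _ ≤ 2 * β / γ * (μ * (p ⬝ᵥ p)) * T := by gcongr
      _ ≤ 2 * β / γ * (1 + μ * (p ⬝ᵥ p)) * T := by gcongr; linarith
  linarith

theorem hot_error_square_integrable_general [DecidableEq m] [DecidableEq n]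
    (hP : P.PosSemidef) (hLyap : (-(Aᵀ * P + P * A) - (2 : ℝ) • 1).PosSemidef)
    (hΛ : Λ.PosSemidef) {Θ : Matrix m N ℝ} (hγ : 0 < γ) (hβ : 0 < β)
    (hμ : 2 * γ / β * (‖toEuclideanCLM (𝕜 := ℝ) Λ‖ * ∑ i, ∑ j, (P * B) i j ^ 2) ≤ μ)
    {Φ : ℝ → N → ℝ} {e : ℝ → n → ℝ} {Θh Ξ : ℝ → Matrix m N ℝ}
    (he : ∀ t ∈ Set.Ici (0 : ℝ), HasDerivWithinAt e
      (A *ᵥ e t + (B * Λ * (Θh t - Θ)) *ᵥ Φ t) (Set.Ici 0) t)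
    (hΞ : ∀ t ∈ Set.Ici (0 : ℝ), ∀ i j, HasDerivWithinAt (fun s => Ξ s i j)
      (-γ * (((Bᵀ * P) *ᵥ e t) i * Φ t j)) (Set.Ici 0) t)
    (hΘh : ∀ t ∈ Set.Ici (0 : ℝ), ∀ i j, HasDerivWithinAt (fun s => Θh s i j)
      (-β * (Θh t i j - Ξ t i j) * (1 + μ * (Φ t ⬝ᵥ Φ t))) (Set.Ici 0) t) :
    ∫⁻ τ in Set.Ioi (0 : ℝ), ENNReal.ofReal (e τ ⬝ᵥ e τ) ≤
      ENNReal.ofReal (tunerLyapunov γ Λ P (Ξ 0 - Θ) (Θh 0 - Ξ 0) (e 0)) := by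
  have hPsymm : P.IsSymm := isHermitian_iff_isSymm.1 hP.1
  have hΛsymm : Λ.IsSymm := isHermitian_iff_isSymm.1 hΛ.1
  refine lintegral_Ioi_le_of_hasDerivWithinAt_le_neg
    (V := fun s => tunerLyapunov γ Λ P (Ξ s - Θ) (Θh s - Ξ s) (e s))
    (fun t ht => hasDerivWithinAt_tunerLyapunov hΛsymm hPsymm (fun i j => ?_) (fun i j => ?_) ?_)
    (fun t _ => tunerLyapunov_nonneg hγ.le hΛ hP _ _ _)
    (fun t _ => dotProduct_self_star_nonneg (e t))
    (fun t _ => tunerLyapunovDeriv_along_field_le hγ hβ hΛ hPsymm hLyap hμ _ _ _ (Φ t))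
  · simpa [tunerStateField, vecMulVec_apply] using (hΞ t ht i j).sub_const (Θ i j)
  · refine ((hΘh t ht i j).fun_sub (hΞ t ht i j)).congr_deriv ?_
    simp only [tunerStateField, Matrix.sub_apply, Matrix.smul_apply, vecMulVec_apply, smul_eq_mul]
    ring
  · simpa [sub_add_sub_cancel'] using he t ht

end HighOrderTuner

/-- Square-integrability of the tracking error for the high-order
tuner. Along any solution of the high-order-tuner error model,
`∫_0^∞ ‖e(τ)‖² dτ ≤ V(0)`. -/
theorem hot_error_square_integrable
    (n m N : ℕ)
    (AH : Matrix (Fin n) (Fin n) ℝ) (B : Matrix (Fin n) (Fin m) ℝ)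
    (Q P : Matrix (Fin n) (Fin n) ℝ)
    (hQ : Q.PosDef) (hP : P.PosDef)
    (hLyap : AHᵀ * P + P * AH = -Q)
    (hQ2 : (Q - (2 : ℝ) • 1).PosSemidef)
    (Λ : Matrix (Fin m) (Fin m) ℝ) (hΛ : Λ.PosDef)
    (hΛnorm : ‖Matrix.toEuclideanCLM (𝕜 := ℝ) Λ‖ ≤ 1)
    (Θ : Matrix (Fin m) (Fin N) ℝ)
    (γ β μ : ℝ) (hγ : 0 < γ) (hβ : 0 < β)
    (hμ : (2 * γ / β) * ∑ i, ∑ j, ((P * B) i j) ^ 2 ≤ μ)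
    (Φ : ℝ → Fin N → ℝ) (hΦ : ContinuousOn Φ (Set.Ici 0))
    (e : ℝ → Fin n → ℝ) (Θh Ξ : ℝ → Matrix (Fin m) (Fin N) ℝ)
    (he : ∀ t ∈ Set.Ici (0 : ℝ),
      HasDerivAt e (AH.mulVec (e t) + (B * Λ * (Θh t - Θ)).mulVec (Φ t)) t)
    (hΞ : ∀ t ∈ Set.Ici (0 : ℝ), ∀ i j,
      HasDerivAt (fun s => Ξ s i j) (-γ * ((Bᵀ * P).mulVec (e t) i * Φ t j)) t)
    (hΘh : ∀ t ∈ Set.Ici (0 : ℝ), ∀ i j,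
      HasDerivAt (fun s => Θh s i j)
        (-β * (Θh t i j - Ξ t i j) * (1 + μ * (Φ t ⬝ᵥ Φ t))) t) :
    (∫⁻ τ in Set.Ioi (0 : ℝ), ENNReal.ofReal (e τ ⬝ᵥ e τ)) ≤
      ENNReal.ofReal ((1 / γ) * ((Ξ 0 - Θ)ᵀ * Λ * (Ξ 0 - Θ)).trace +
        (1 / γ) * ((Θh 0 - Ξ 0)ᵀ * Λ * (Θh 0 - Ξ 0)).trace +
        e 0 ⬝ᵥ P.mulVec (e 0)) := by
  have hμΛ := (mul_le_mul_of_nonneg_left (mul_le_of_le_one_left (by positivity) hΛnorm)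
    (by positivity)).trans hμ
  exact hot_error_square_integrable_general hP.posSemidef (by rwa [hLyap, neg_neg])
    hΛ.posSemidef hγ hβ hμΛ (fun t ht => (he t ht).hasDerivWithinAt)
    (fun t ht i j => (hΞ t ht i j).hasDerivWithinAt)
    (fun t ht i j => (hΘh t ht i j).hasDerivWithinAt)
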